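/- Let ν > −1 and x > 0. Then the limit lim_{y → x, y ≠ x} [ J_ν(2√x) · √y · J_ν′(2√y) − √x · J_ν′(2√x) · J_ν(2√y) ] / (x − y) exists and equals J_ν′(2√x)² + (1 − ν²/(4x)) · J_ν(2√x)², and this value also equals J_ν(2√x)² − J_{ν+1}(2√x) · J_{ν−1}(2√x). -/

import Mathlib

open Real Filter

/-- The Bessel function of the first kind `J_ν(z)`
(with the convention `1/Γ(m) = 0` at nonpositive integers `m`). -/
noncomputable def besselJ (ν z : ℝ) : ℝ :=
  ∑' n : ℕ, ((-1 : ℝ) ^ n / (Real.Gamma ((n : ℝ) + 1) * Real.Gamma ((n : ℝ) + 1 + ν))) *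
    (z / 2) ^ (2 * (n : ℝ) + ν)

/-- The derivative `J_ν′` of the Bessel function. -/
noncomputable def besselJ' (ν z : ℝ) : ℝ := deriv (fun w => besselJ ν w) z

/-!
Factor `J_ν(z) = (z/2)^ν C_ν(-z²/4)` through the entire Bessel–Clifford function `C_ν`. The
recurrence of `1/Γ`, valid for every real argument, gives `C_ν' = C_{ν+1}` and
`C_{ν-1}(x) = ν C_ν(x) + x C_{ν+1}(x)`, hence the ladder relations
`J_ν' = (ν/z) J_ν - J_{ν+1} = J_{ν-1} - (ν/z) J_ν`. They imply Bessel's equation, which for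
`u(x) = J_ν(2√x)` and `p(x) = x u'(x) = √x J_ν'(2√x)` reads `p' = -(1 - ν²/(4x)) u`. The kernel is
`(u(x) p(y) - p(x) u(y)) / (x - y)`, so its diagonal limit is the Wronskian `p u' - u p'`. The
second form of the density is the product of the two ladder relations.
-/

open scoped Nat Topology

section Calculus

variable {𝕜 : Type*} [NontriviallyNormedField 𝕜]

theorem hasDerivAt_tsum_mul_pow [CompleteSpace 𝕜] {c : ℕ → 𝕜} {x : 𝕜}
    (hx : ‖x‖ₑ < (FormalMultilinearSeries.ofScalars 𝕜 c).radius) :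
    HasDerivAt (fun y => ∑' n, c n * y ^ n) (∑' n : ℕ, (n + 1) * c (n + 1) * x ^ n) x := by
  set p := FormalMultilinearSeries.ofScalars 𝕜 c with hp
  have sum_eq : p.sum = fun y => ∑' n, c n * y ^ n := by
    ext y
    simp [FormalMultilinearSeries.sum, hp, mul_comm]
  have hasSum_derivSeries : HasSum (fun n => p.derivSeries n fun _ => x) (p.derivSeries.sum x) :=
    p.derivSeries.hasSum (by simpa using hx.trans_le p.radius_le_radius_derivSeries)
  have derivSeries_apply_one (n : ℕ) :
      p.derivSeries n (fun _ => x) 1 = (n + 1) * c (n + 1) * x ^ n := by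
    rw [FormalMultilinearSeries.apply_eq_pow_smul_coeff, smul_apply,
      FormalMultilinearSeries.derivSeries_coeff_one, hp, FormalMultilinearSeries.coeff_ofScalars,
      smul_eq_mul, nsmul_eq_mul]
    push_cast
    ring
  have derivSeries_sum_apply_one :
      p.derivSeries.sum x 1 = ∑' n : ℕ, (n + 1) * c (n + 1) * x ^ n := by
    simpa only [ContinuousLinearMap.apply_apply, derivSeries_apply_one] using
      (hasSum_derivSeries.mapL (ContinuousLinearMap.apply 𝕜 𝕜 1)).tsum_eq.symm
  rw [← sum_eq, ← derivSeries_sum_apply_one]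
  exact (FormalMultilinearSeries.hasFDerivAt_sum hx).hasDerivAt

theorem tendsto_mul_sub_mul_div_sub {f g : 𝕜 → 𝕜} {f' g' x : 𝕜}
    (hf : HasDerivAt f f' x) (hg : HasDerivAt g g' x) :
    Tendsto (fun y => (f x * g y - g x * f y) / (x - y)) (𝓝[≠] x) (𝓝 (g x * f' - f x * g')) := by
  have hslope := ((hf.const_mul (g x)).sub (hg.const_mul (f x))).tendsto_slope
  refine hslope.congr fun y => ?_
  rw [slope_def_field, ← neg_sub x y, div_neg, ← neg_div]
  simp only [Pi.sub_apply]
  ring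

end Calculus

theorem inv_Gamma_eq_mul_inv_Gamma_add_one (s : ℝ) : (Gamma s)⁻¹ = s * (Gamma (s + 1))⁻¹ := by
  have h := Complex.one_div_Gamma_eq_self_mul_one_div_Gamma_add_one s
  norm_cast at h
  simp only [Complex.Gamma_ofReal] at h
  exact_mod_cast h

/-- The Taylor coefficients `1 / (n! Γ(n + 1 + ν))` of the Bessel–Clifford function. The junk value
`Γ(-m) = 0` makes them vanish at the poles of `Γ`, as the entire function `1 / Γ` does. -/
noncomputable def besselCliffordCoeff (ν : ℝ) (n : ℕ) : ℝ :=
  ((n ! : ℝ) * Gamma (n + 1 + ν))⁻¹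

/-- The Bessel–Clifford function `C_ν`, the entire part of `J_ν`; the argument is normalised so that
`J_ν(z) = (z / 2) ^ ν * C_ν(-(z / 2) ^ 2)`. -/
noncomputable def besselClifford (ν x : ℝ) : ℝ :=
  ∑' n, besselCliffordCoeff ν n * x ^ n

theorem add_one_mul_besselCliffordCoeff_add_one (ν : ℝ) (n : ℕ) :
    (n + 1) * besselCliffordCoeff ν (n + 1) = besselCliffordCoeff (ν + 1) n := by
  have gamma_arg : ((n + 1 : ℕ) : ℝ) + 1 + ν = n + 1 + (ν + 1) := by push_cast; ring
  rw [besselCliffordCoeff, besselCliffordCoeff, gamma_arg, Nat.factorial_succ]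
  push_cast
  field_simp

theorem add_mul_besselCliffordCoeff (ν : ℝ) (n : ℕ) :
    (n + ν) * besselCliffordCoeff ν n = besselCliffordCoeff (ν - 1) n := by
  have gamma_arg : (n : ℝ) + 1 + (ν - 1) = n + ν := by ring
  rw [besselCliffordCoeff, besselCliffordCoeff, gamma_arg, mul_inv, mul_inv,
    inv_Gamma_eq_mul_inv_Gamma_add_one (n + ν), add_right_comm (n : ℝ) 1 ν]
  ring

theorem besselCliffordCoeff_sub_one_add_one (ν : ℝ) (n : ℕ) :
    besselCliffordCoeff (ν - 1) (n + 1) =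
      ν * besselCliffordCoeff ν (n + 1) + besselCliffordCoeff (ν + 1) n := by
  rw [← add_mul_besselCliffordCoeff ν (n + 1), ← add_one_mul_besselCliffordCoeff_add_one]
  push_cast
  ring

theorem ofReal_besselCliffordCoeff (ν : ℝ) (n : ℕ) :
    (besselCliffordCoeff ν n : ℂ) = Complex.regularizedHGFunCoeff 0 {(ν + 1 : ℂ)} n := by
  have gamma_arg : (ν : ℂ) + 1 + n = ((n + 1 + ν : ℝ) : ℂ) := by push_cast; ring
  simp [besselCliffordCoeff, Complex.regularizedHGFunCoeff, gamma_arg, Complex.Gamma_ofReal,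
    -Complex.ofReal_add]

theorem radius_ofScalars_besselCliffordCoeff (ν : ℝ) :
    (FormalMultilinearSeries.ofScalars ℝ (besselCliffordCoeff ν)).radius = ⊤ := by
  have hypergeometric_radius :
      (Complex.regularizedHGFunSeries 0 {(ν + 1 : ℂ)}).radius = ⊤ :=
    Complex.radius_regularizedHGFunSeries_eq_top (by simp)
  rw [FormalMultilinearSeries.radius_eq_top_iff_summable_norm] at hypergeometric_radius ⊢
  simpa only [Complex.regularizedHGFunSeries, FormalMultilinearSeries.ofScalars_norm,
    ← ofReal_besselCliffordCoeff, Complex.norm_real] using hypergeometric_radius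

theorem summable_besselCliffordCoeff_mul_pow (ν x : ℝ) :
    Summable fun n => besselCliffordCoeff ν n * x ^ n := by
  have h := (FormalMultilinearSeries.ofScalars ℝ (besselCliffordCoeff ν)).summable (x := x)
    (by simp [radius_ofScalars_besselCliffordCoeff])
  simpa [mul_comm] using h

theorem hasDerivAt_besselClifford (ν x : ℝ) :
    HasDerivAt (besselClifford ν) (besselClifford (ν + 1) x) x := by
  have h := hasDerivAt_tsum_mul_pow (c := besselCliffordCoeff ν) (x := x)
    (by simp [radius_ofScalars_besselCliffordCoeff])
  simpa only [add_one_mul_besselCliffordCoeff_add_one] using! h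

theorem besselClifford_sub_one (ν x : ℝ) :
    besselClifford (ν - 1) x = ν * besselClifford ν x + x * besselClifford (ν + 1) x := by
  have coeff_zero : besselCliffordCoeff (ν - 1) 0 = ν * besselCliffordCoeff ν 0 := by
    simpa using (add_mul_besselCliffordCoeff ν 0).symm
  have term_succ (n : ℕ) : besselCliffordCoeff (ν - 1) (n + 1) * x ^ (n + 1) =
      ν * (besselCliffordCoeff ν (n + 1) * x ^ (n + 1)) +
        x * (besselCliffordCoeff (ν + 1) n * x ^ n) := by
    rw [besselCliffordCoeff_sub_one_add_one]
    ring
  have summable_tail := (summable_nat_add_iff 1).2 (summable_besselCliffordCoeff_mul_pow ν x)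
  simp only [besselClifford]
  rw [(summable_besselCliffordCoeff_mul_pow (ν - 1) x).tsum_eq_zero_add,
    (summable_besselCliffordCoeff_mul_pow ν x).tsum_eq_zero_add, tsum_congr term_succ,
    (summable_tail.mul_left ν).tsum_add
      ((summable_besselCliffordCoeff_mul_pow (ν + 1) x).mul_left x),
    tsum_mul_left, tsum_mul_left, coeff_zero]
  ring

section Bessel

variable (ν : ℝ) {x z : ℝ}

theorem besselJ_eq_rpow_mul_besselClifford (hz : 0 < z) :
    besselJ ν z = (z / 2) ^ ν * besselClifford ν (-(z / 2) ^ 2) := by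
  rw [besselJ, besselClifford, ← tsum_mul_left]
  refine tsum_congr fun n => ?_
  have rpow_eq : (z / 2) ^ (2 * (n : ℝ) + ν) = ((z / 2) ^ 2) ^ n * (z / 2) ^ ν := by
    rw [rpow_add (by positivity), rpow_mul (by positivity), rpow_natCast, rpow_two]
  rw [rpow_eq, besselCliffordCoeff, Gamma_nat_eq_factorial, neg_pow ((z / 2) ^ 2)]
  ring

theorem besselJ_sub_one_add_besselJ_add_one (hz : 0 < z) :
    besselJ (ν - 1) z + besselJ (ν + 1) z = 2 * ν / z * besselJ ν z := by
  have hz2 : 0 < z / 2 := by positivity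
  simp only [besselJ_eq_rpow_mul_besselClifford _ hz]
  rw [besselClifford_sub_one, rpow_add_one hz2.ne', rpow_sub_one hz2.ne']
  field_simp
  ring

theorem hasDerivAt_besselJ (hz : 0 < z) :
    HasDerivAt (besselJ ν) (ν / z * besselJ ν z - besselJ (ν + 1) z) z := by
  have hz2 : 0 < z / 2 := by positivity
  have half : HasDerivAt (fun w : ℝ => w / 2) (1 / 2) z := (hasDerivAt_id z).div_const 2
  have power := half.rpow_const (p := ν) (Or.inl hz2.ne')
  have neg_half_sq : HasDerivAt (fun w : ℝ => -(w / 2) ^ 2) (-(z / 2)) z :=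
    (half.pow 2).neg.congr_deriv (by ring)
  have clifford : HasDerivAt (fun w => besselClifford ν (-(w / 2) ^ 2))
      (besselClifford (ν + 1) (-(z / 2) ^ 2) * -(z / 2)) z :=
    (hasDerivAt_besselClifford ν _).comp z neg_half_sq
  have besselJ_eventuallyEq : besselJ ν =ᶠ[𝓝 z]
      fun w => (w / 2) ^ ν * besselClifford ν (-(w / 2) ^ 2) :=
    (lt_mem_nhds hz).mono fun w hw => besselJ_eq_rpow_mul_besselClifford ν hw
  refine ((power.mul clifford).congr_of_eventuallyEq besselJ_eventuallyEq).congr_deriv ?_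
  simp only [besselJ_eq_rpow_mul_besselClifford _ hz, rpow_add_one hz2.ne', rpow_sub_one hz2.ne']
  field_simp
  ring

theorem besselJ'_eq_sub_besselJ_add_one (hz : 0 < z) :
    besselJ' ν z = ν / z * besselJ ν z - besselJ (ν + 1) z :=
  (hasDerivAt_besselJ ν hz).deriv

theorem besselJ'_eq_besselJ_sub_one_sub (hz : 0 < z) :
    besselJ' ν z = besselJ (ν - 1) z - ν / z * besselJ ν z := by
  linear_combination besselJ'_eq_sub_besselJ_add_one ν hz -
    besselJ_sub_one_add_besselJ_add_one ν hz

theorem besselJ'_sq_add_one_sub_mul_besselJ_sq (hz : 0 < z) :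
    besselJ' ν z ^ 2 + (1 - ν ^ 2 / z ^ 2) * besselJ ν z ^ 2 =
      besselJ ν z ^ 2 - besselJ (ν + 1) z * besselJ (ν - 1) z := by
  have raise : besselJ (ν + 1) z = ν / z * besselJ ν z - besselJ' ν z := by
    rw [besselJ'_eq_sub_besselJ_add_one ν hz]
    ring
  have lower : besselJ (ν - 1) z = ν / z * besselJ ν z + besselJ' ν z := by
    rw [besselJ'_eq_besselJ_sub_one_sub ν hz]
    ring
  rw [raise, lower]
  ring

theorem hasDerivAt_mul_besselJ' (hz : 0 < z) :
    HasDerivAt (fun w => w * besselJ' ν w) (-(z - ν ^ 2 / z) * besselJ ν z) z := by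
  have mul_besselJ'_eventuallyEq : (fun w => w * besselJ' ν w) =ᶠ[𝓝 z]
      fun w => ν * besselJ ν w - w * besselJ (ν + 1) w :=
    (lt_mem_nhds hz).mono fun w (hw : 0 < w) => by
      dsimp only
      rw [besselJ'_eq_sub_besselJ_add_one ν hw]
      field_simp
  have deriv_besselJ_add_one : HasDerivAt (besselJ (ν + 1))
      (besselJ ν z - (ν + 1) / z * besselJ (ν + 1) z) z := by
    refine (hasDerivAt_besselJ (ν + 1) hz).congr_deriv ?_
    rw [← besselJ'_eq_sub_besselJ_add_one _ hz, besselJ'_eq_besselJ_sub_one_sub _ hz,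
      add_sub_cancel_right]
  refine ((((hasDerivAt_besselJ ν hz).const_mul ν).sub
    ((hasDerivAt_id z).mul deriv_besselJ_add_one)).congr_of_eventuallyEq
      mul_besselJ'_eventuallyEq).congr_deriv ?_
  simp only [id_eq]
  field_simp
  ring

theorem hasDerivAt_besselJ_two_mul_sqrt (hx : 0 < x) :
    HasDerivAt (fun y => besselJ ν (2 * √y)) (besselJ' ν (2 * √x) / √x) x := by
  have hz : 0 < 2 * √x := by positivity
  have besselJ_deriv : HasDerivAt (besselJ ν) (besselJ' ν (2 * √x)) (2 * √x) :=
    (hasDerivAt_besselJ ν hz).differentiableAt.hasDerivAt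
  refine (besselJ_deriv.comp x ((hasDerivAt_sqrt hx.ne').const_mul 2)).congr_deriv ?_
  field_simp

theorem hasDerivAt_sqrt_mul_besselJ'_two_mul_sqrt (hx : 0 < x) :
    HasDerivAt (fun y => √y * besselJ' ν (2 * √y))
      (-(1 - ν ^ 2 / (4 * x)) * besselJ ν (2 * √x)) x := by
  have hz : 0 < 2 * √x := by positivity
  have hcomp := ((hasDerivAt_mul_besselJ' ν hz).comp x
    ((hasDerivAt_sqrt hx.ne').const_mul 2)).const_mul (1 / 2)
  have half_mul_eq : (fun y => √y * besselJ' ν (2 * √y)) =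
      fun y => 1 / 2 * (2 * √y * besselJ' ν (2 * √y)) := by
    ext y
    ring
  rw [half_mul_eq]
  refine hcomp.congr_deriv ?_
  have sq_sqrt_x : √x ^ 2 = x := sq_sqrt hx.le
  field_simp
  rw [sq_sqrt_x]
  ring

end Bessel

theorem bessel_kernel_diagonal_general (ν : ℝ) {x : ℝ} (hx : 0 < x) :
    Tendsto
      (fun y => (besselJ ν (2 * √x) * √y * besselJ' ν (2 * √y) -
        √x * besselJ' ν (2 * √x) * besselJ ν (2 * √y)) / (x - y))
      (𝓝[≠] x)
      (𝓝 (besselJ' ν (2 * √x) ^ 2 + (1 - ν ^ 2 / (4 * x)) * besselJ ν (2 * √x) ^ 2)) ∧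
    besselJ' ν (2 * √x) ^ 2 + (1 - ν ^ 2 / (4 * x)) * besselJ ν (2 * √x) ^ 2 =
      besselJ ν (2 * √x) ^ 2 - besselJ (ν + 1) (2 * √x) * besselJ (ν - 1) (2 * √x) := by
  have four_mul_eq : 4 * x = (2 * √x) ^ 2 := by rw [mul_pow, sq_sqrt hx.le]; norm_num
  constructor
  · have limit := tendsto_mul_sub_mul_div_sub (hasDerivAt_besselJ_two_mul_sqrt ν hx)
      (hasDerivAt_sqrt_mul_besselJ'_two_mul_sqrt ν hx)
    have wronskian_eq : √x * besselJ' ν (2 * √x) * (besselJ' ν (2 * √x) / √x) -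
        besselJ ν (2 * √x) * (-(1 - ν ^ 2 / (4 * x)) * besselJ ν (2 * √x)) =
        besselJ' ν (2 * √x) ^ 2 + (1 - ν ^ 2 / (4 * x)) * besselJ ν (2 * √x) ^ 2 := by
      field_simp
      ring
    rw [wronskian_eq] at limit
    simpa only [mul_assoc] using limit
  · rw [four_mul_eq]
    exact besselJ'_sq_add_one_sub_mul_besselJ_sq ν (by positivity)

/-- The diagonal value of the Bessel kernel: the limit defining `K_{J_ν}(x|x)`
exists and equals the particle density `ρ_ν(x)` in both of its standard forms. -/
theorem bessel_kernel_diagonal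
    (ν : ℝ) (hν : -1 < ν) (x : ℝ) (hx : 0 < x) :
    Tendsto
      (fun y : ℝ =>
        (besselJ ν (2 * Real.sqrt x) * Real.sqrt y * besselJ' ν (2 * Real.sqrt y) -
            Real.sqrt x * besselJ' ν (2 * Real.sqrt x) * besselJ ν (2 * Real.sqrt y)) /
          (x - y))
      (nhdsWithin x {x}ᶜ)
      (nhds ((besselJ' ν (2 * Real.sqrt x)) ^ 2 +
        (1 - ν ^ 2 / (4 * x)) * (besselJ ν (2 * Real.sqrt x)) ^ 2)) ∧
    (besselJ' ν (2 * Real.sqrt x)) ^ 2 +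
        (1 - ν ^ 2 / (4 * x)) * (besselJ ν (2 * Real.sqrt x)) ^ 2
      = (besselJ ν (2 * Real.sqrt x)) ^ 2 -
          besselJ (ν + 1) (2 * Real.sqrt x) * besselJ (ν - 1) (2 * Real.sqrt x) :=
  bessel_kernel_diagonal_general ν hx
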